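/- Let G be a k-connected (k ≥ 2) finite simple graph with n ≥ 3 vertices, e edges, minimum degree δ ≥ 1, and maximum degree Δ. If Inv(G) ≤ (n − k − 1)/Δ + (2(k + 1)²δ² − e²)/((k + 1)·Δ³), then G is Hamiltonian. -/

import Mathlib

open Finset

/-- The first Zagreb index of a graph: the sum of the squares of the vertex degrees. -/
def zagreb1 {V : Type*} [Fintype V] (G : SimpleGraph V) [DecidableRel G.Adj] : ℝ :=
  ∑ u, (G.degree u : ℝ) ^ 2

/-- The forgotten topological index of a graph: the sum of the cubes of the vertex degrees. -/
def forgottenIndex {V : Type*} [Fintype V] (G : SimpleGraph V) [DecidableRel G.Adj] : ℝ :=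
  ∑ u, (G.degree u : ℝ) ^ 3

/-- The inverse degree of a graph: the sum of the reciprocals of the vertex degrees. -/
noncomputable def invDegree {V : Type*} [Fintype V] (G : SimpleGraph V) [DecidableRel G.Adj] : ℝ :=
  ∑ u, 1 / (G.degree u : ℝ)

/-- The independence number of a graph: the largest cardinality of a set of pairwise
nonadjacent vertices. -/
noncomputable def indepNum {V : Type*} [Fintype V] (G : SimpleGraph V) : ℕ :=
  sSup {k | ∃ s : Finset V, s.card = k ∧ ∀ u ∈ s, ∀ v ∈ s, ¬ G.Adj u v}

/-- A graph is a regular balanced bipartite graph if its vertices can be partitioned into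
two parts of equal size with every edge joining the two parts, and all vertices have the
same degree. -/
def IsRegularBalancedBipartite {V : Type*} [Fintype V] (G : SimpleGraph V) [DecidableRel G.Adj] : Prop :=
  ∃ (A : Finset V) (r : ℕ), 2 * A.card = Fintype.card V ∧
    (∀ u v, G.Adj u v → (u ∈ A ↔ v ∉ A)) ∧ G.IsRegularOfDegree r

/-- A graph is `k`-connected if it has more than `k` vertices and removing any set of
fewer than `k` vertices leaves a connected graph. -/
def IsKConnected {V : Type*} [Fintype V] (G : SimpleGraph V) (k : ℕ) : Prop :=
  k < Fintype.card V ∧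
    ∀ S : Finset V, S.card < k → (G.induce (↑S : Set V)ᶜ).Connected

/-- A graph is traceable if it has a Hamiltonian path. -/
def IsTraceable {V : Type*} [DecidableEq V] (G : SimpleGraph V) : Prop :=
  ∃ (u v : V) (p : G.Walk u v), p.IsHamiltonian

open SimpleGraph

/-!
Suppose `G` is not Hamiltonian and let `u` lie outside a longest cycle `C`. The component of `u` in
`G - C` has at least `k` neighbors on `C`, by `k`-connectivity, and their successors on `C` form
together with `u` an independent set, since otherwise `C` could be lengthened (Chvátal–Erdős). So
there is an independent set `I` with `k + 1` vertices, whence `(k + 1) δ ≤ e`. On the other hand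
`n / Δ ≤ Inv(G)`, so the hypothesis gives `(k + 1)² Δ² + e² ≤ 2 (k + 1)² δ²`, which forces `Δ = δ`
and `e = (k + 1) δ`. Then `G` is regular and `I` meets every edge, so `G` is bipartite with two
parts of size `k + 1`. As all degrees are at least `k`, the graph contains `K_{k+1,k+1}` minus a
perfect matching, which is Hamiltonian because `k + 1 ≥ 3`.
-/

section Cycle

variable {α : Type*} {C : Cycle α} {x y x' y' : α}

/-- `y` comes right after `x` on the cyclic sequence `C`. A rotation of `C` starting with `x, y` is
the form that surgery on `C` needs, and unlike `Cycle.next` it carries no proof arguments. -/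
def ConsecutiveOn (C : Cycle α) (x y : α) : Prop :=
  ∃ l : List α, C = ↑(x :: y :: l)

lemma ConsecutiveOn.left_mem (h : ConsecutiveOn C x y) : x ∈ C := by
  obtain ⟨l, rfl⟩ := h
  simp

lemma ConsecutiveOn.right_mem (h : ConsecutiveOn C x y) : y ∈ C := by
  obtain ⟨l, rfl⟩ := h
  simp

lemma exists_consecutiveOn (hC : C.Nontrivial) (hx : x ∈ C) : ∃ y, ConsecutiveOn C x y := by
  induction C using Quotient.inductionOn' with
  | h l =>
    obtain ⟨s, t, rfl⟩ := List.append_of_mem (show x ∈ l from hx)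
    have hrot : ((s ++ x :: t : List α) : Cycle α) = ↑(x :: (t ++ s)) :=
      Cycle.coe_eq_coe.2 List.isRotated_append
    match hts : t ++ s with
    | [] =>
      have hlen : 2 ≤ (s ++ x :: t).length := Cycle.length_nontrivial hC
      have : (t ++ s).length = 0 := by rw [hts, List.length_nil]
      grind
    | y :: l => exact ⟨y, l, hts ▸ hrot⟩

lemma ConsecutiveOn.right_unique (hC : C.Nodup) (h : ConsecutiveOn C x y)
    (h' : ConsecutiveOn C x y') : y = y' := by
  classical
  have eq_next {z : α} (hz : ConsecutiveOn C x z) : z = C.next hC x h.left_mem := by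
    obtain ⟨l, rfl⟩ := hz
    exact (List.next_cons_cons_eq l x z (by simp)).symm
  exact (eq_next h).trans (eq_next h').symm

lemma ConsecutiveOn.left_unique (hC : C.Nodup) (h : ConsecutiveOn C x y)
    (h' : ConsecutiveOn C x' y) : x = x' := by
  classical
  have eq_prev {z : α} (hz : ConsecutiveOn C z y) : z = C.prev hC y h.right_mem := by
    obtain ⟨l, rfl⟩ := hz
    have hyz : y ≠ z := fun hyz => (List.nodup_cons.1 hC).1 (by simp [hyz])
    exact (List.prev_cons_cons_of_ne l y z (by simp) hyz).symm
  exact (eq_prev h).trans (eq_prev h').symm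

lemma ConsecutiveOn.exists_eq_append (hC : C.Nodup) (h : ConsecutiveOn C x y)
    (h' : ConsecutiveOn C x' y') (hxx' : x ≠ x') (hyx' : y ≠ x') (hxy' : x ≠ y') :
    ∃ A B : List α, C = ↑(x :: y :: (A ++ x' :: y' :: B)) := by
  obtain ⟨l, hl⟩ := id h
  have hx'l : x' ∈ l := by
    have hx' := h'.left_mem
    rw [hl] at hx'
    simpa [hxx'.symm, hyx'.symm] using hx'
  obtain ⟨A, B, rfl⟩ := List.append_of_mem hx'l
  have hrot : C = ↑(x' :: (B ++ x :: y :: A)) := by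
    rw [hl, Cycle.coe_eq_coe]
    exact List.isRotated_append (l := x :: y :: A) (l' := x' :: B)
  cases B with
  | nil => exact absurd (h'.right_unique hC ⟨_, hrot⟩).symm hxy'
  | cons z B =>
    obtain rfl : y' = z := h'.right_unique hC ⟨_, hrot⟩
    exact ⟨A, B, hl⟩

lemma length_eq_card_of_forall_mem [Fintype α] (hC : C.Nodup) (h : ∀ a, a ∈ C) :
    C.length = Fintype.card α := by
  classical
  induction C using Quotient.inductionOn' with
  | h l =>
    have huniv : l.toFinset = Finset.univ :=
      Finset.eq_univ_iff_forall.2 fun a => List.mem_toFinset.2 (h a)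
    rw [← Finset.card_univ, ← huniv]
    exact (List.toFinset_card_of_nodup hC).symm

end Cycle

section Hamiltonian

variable {V : Type*} [Fintype V] [DecidableEq V] {G : SimpleGraph V}

theorem isHamiltonian_of_cycle {C : Cycle V} (hnodup : C.Nodup)
    (hchain : C.Chain G.Adj) (hlen : C.length = Fintype.card V) (hcard : 3 ≤ Fintype.card V) :
    G.IsHamiltonian := by
  intro _
  induction C using Cycle.induction_on with
  | nil =>
    rw [Cycle.length_nil] at hlen
    omega
  | cons v l =>
    rw [Cycle.chain_coe_cons] at hchain
    let p : G.Walk v v :=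
      (Walk.ofSupport (v :: (l ++ [v])) (List.cons_ne_nil _ _) hchain).copy (by simp) (by simp)
    have hsupp : p.support = v :: (l ++ [v]) :=
      (Walk.support_copy _ _ _).trans (Walk.support_ofSupport _ _)
    have hplen : p.length = Fintype.card V := by
      have := p.length_support
      simp only [hsupp, List.length_cons, List.length_append, List.length_nil] at this
      rw [Cycle.length_coe, List.length_cons] at hlen
      omega
    have hnil : ¬ p.Nil := Walk.not_nil_iff_lt_length.2 (by omega)
    refine ⟨v, p, Walk.isHamiltonianCycle_iff_isCycle_and_length_eq.2 ⟨?_, hplen⟩⟩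
    rw [Walk.isCycle_iff_isPath_tail_and_le_length, Walk.isPath_def,
      Walk.support_tail_of_not_nil _ hnil, hsupp, List.tail_cons]
    exact ⟨(List.perm_append_singleton v l).nodup_iff.2 hnodup, by omega⟩

theorem isHamiltonian_of_enumeration {c : ℕ → V} (hinj : Set.InjOn c (Set.Iio (Fintype.card V)))
    (hadj : ∀ i < Fintype.card V, G.Adj (c i) (c (i + 1))) (hclosed : c (Fintype.card V) = c 0)
    (hcard : 3 ≤ Fintype.card V) : G.IsHamiltonian := by
  refine isHamiltonian_of_cycle (C := ↑((List.range (Fintype.card V)).map c)) ?_ ?_ (by simp) hcard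
  · exact List.nodup_range.map_on fun i hi j hj =>
      hinj (Set.mem_Iio.2 (List.mem_range.1 hi)) (Set.mem_Iio.2 (List.mem_range.1 hj))
  · obtain ⟨n, hn⟩ : ∃ n, Fintype.card V = n + 1 := ⟨Fintype.card V - 1, by omega⟩
    rw [hn] at hadj hclosed ⊢
    rw [← Cycle.map_coe, Cycle.chain_map, Cycle.chain_range_succ]
    exact ⟨hclosed ▸ hadj n (by omega), fun i hi => hadj i (by omega)⟩

end Hamiltonian

section Longest

variable {V : Type*} {G : SimpleGraph V} {C : Cycle V}

/-- `a` and `b` are joined by a walk avoiding the cyclic sequence `C`, that is, they lie in the same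
component of `G - C`. Phrased with walks of `G` so that no induced subgraph is involved. -/
def LinkedOutside (G : SimpleGraph V) (C : Cycle V) (a b : V) : Prop :=
  ∃ p : G.Walk a b, ∀ v ∈ p.support, v ∉ C

lemma LinkedOutside.refl {a : V} (ha : a ∉ C) : LinkedOutside G C a a :=
  ⟨.nil, by simpa using ha⟩

lemma LinkedOutside.symm {a b : V} (h : LinkedOutside G C a b) : LinkedOutside G C b a := by
  obtain ⟨p, hp⟩ := h
  exact ⟨p.reverse, by simpa using hp⟩

lemma LinkedOutside.trans {a b c : V} (hab : LinkedOutside G C a b) (hbc : LinkedOutside G C b c) :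
    LinkedOutside G C a c := by
  obtain ⟨p, hp⟩ := hab
  obtain ⟨q, hq⟩ := hbc
  exact ⟨p.append q, fun v hv => ((Walk.mem_support_append_iff _ _).1 hv).elim (hp v) (hq v)⟩

lemma LinkedOutside.right_notMem {a b : V} (h : LinkedOutside G C a b) : b ∉ C := by
  obtain ⟨p, hp⟩ := h
  exact hp b p.end_mem_support

lemma LinkedOutside.of_adj {a b : V} (ha : a ∉ C) (hb : b ∉ C) (hab : G.Adj a b) :
    LinkedOutside G C a b :=
  ⟨hab.toWalk, by simp [ha, hb]⟩

lemma LinkedOutside.exists_isPath {a b : V} (h : LinkedOutside G C a b) :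
    ∃ p : G.Walk a b, p.IsPath ∧ ∀ v ∈ p.support, v ∉ C := by
  classical
  obtain ⟨p, hp⟩ := h
  exact ⟨p.bypass, p.bypass_isPath, fun v hv => hp v (p.support_bypass_subset_support hv)⟩

/-- A cyclic sequence of distinct vertices, consecutive ones adjacent, of maximal length. A single
edge counts as a sequence of length two. -/
structure IsLongestCycle (G : SimpleGraph V) (C : Cycle V) : Prop where
  nodup : C.Nodup
  chain : C.Chain G.Adj
  length_le : ∀ D : Cycle V, D.Nodup → D.Chain G.Adj → D.length ≤ C.length

theorem exists_isLongestCycle [Finite V] (G : SimpleGraph V) : ∃ C, IsLongestCycle G C := by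
  classical
  have := Fintype.ofFinite V
  let S : Set (Cycle V) := {D | D.Nodup ∧ D.Chain G.Adj}
  have hfin : S.Finite := by
    have : Finite {D : Cycle V // D.Nodup} := inferInstance
    exact Set.Finite.subset (s := {D : Cycle V | D.Nodup}) this fun D hD => hD.1
  have hne : S.Nonempty := ⟨Cycle.nil, by simp, by simp⟩
  obtain ⟨C, ⟨hnodup, hchain⟩, hmax⟩ := Set.exists_max_image S Cycle.length hfin hne
  exact ⟨C, hnodup, hchain, fun D hD hD' => hmax D ⟨hD, hD'⟩⟩

namespace IsLongestCycle

lemma nontrivial (hC : IsLongestCycle G C) {a b : V} (hab : G.Adj a b) : C.Nontrivial := by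
  have hlen : 2 ≤ C.length :=
    hC.length_le ↑[a, b] (by simpa using hab.ne) (by simp [hab, hab.symm])
  rw [hC.nodup.nontrivial_iff, Cycle.length_subsingleton_iff]
  omega

-- Closing up, through the outside, a path that visits all of `C` would give a longer cycle.
lemma not_linkedOutside_of_path (hC : IsLongestCycle G C) {s t a b : V} {L : List V}
    (hperm : C.toMultiset = ↑(s :: (L ++ [t]))) (hL : (s :: (L ++ [t])).IsChain G.Adj)
    (hsa : G.Adj s a) (htb : G.Adj t b) : ¬ LinkedOutside G C a b := by
  classical
  intro hab
  obtain ⟨p, hp, hpC⟩ := hab.symm.exists_isPath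
  let q : G.Walk t s := .cons htb (p.concat hsa.symm)
  have hq : ([t] ++ (p.support ++ [s])).IsChain G.Adj := by
    simpa [q, Walk.support_concat] using q.isChain_adj_support
  let D : List V := s :: (L ++ [t]) ++ p.support
  have hD : (D : Cycle V).Chain G.Adj := by
    have := List.IsChain.append_overlap (l₁ := s :: L) (by simpa using hL) hq (by simp)
    simpa [D] using this
  induction C using Quotient.inductionOn' with
  | h l =>
    have hperm' : l.Perm (s :: (L ++ [t])) := Multiset.coe_eq_coe.1 hperm
    have hDnodup : D.Nodup := by
      refine List.nodup_append'.2 ⟨hperm'.nodup_iff.1 hC.nodup, hp.support_nodup, ?_⟩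
      exact fun v hvL hvp => hpC v hvp (hperm'.mem_iff.2 hvL)
    have hlen : D.length ≤ l.length := hC.length_le D hDnodup hD
    rw [List.length_append, ← hperm'.length_eq, Walk.length_support] at hlen
    omega

lemma not_linkedOutside_of_consecutiveOn (hC : IsLongestCycle G C) {x y a b : V}
    (hxy : ConsecutiveOn C x y) (hxa : G.Adj x a) (hyb : G.Adj y b) :
    ¬ LinkedOutside G C a b := by
  obtain ⟨l, rfl⟩ := hxy
  have hchain : (y :: (l ++ [x])).IsChain G.Adj :=
    ((Cycle.chain_coe_cons G.Adj x (y :: l)).1 hC.chain).tail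
  refine fun hab => hC.not_linkedOutside_of_path ?_ hchain hyb hxa hab.symm
  exact Multiset.coe_eq_coe.2 (List.perm_append_singleton x (y :: l)).symm

lemma not_adj_of_consecutiveOn (hC : IsLongestCycle G C) {x x' y y' a b : V}
    (hxy : ConsecutiveOn C x y) (hxy' : ConsecutiveOn C x' y') (hxa : G.Adj x a)
    (hxb : G.Adj x' b) (hab : LinkedOutside G C a b) : ¬ G.Adj y y' := by
  intro hyy'
  have hxx' : x ≠ x' := by
    rintro rfl
    exact hyy'.ne (hxy.right_unique hC.nodup hxy')
  have hyx' : y ≠ x' := by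
    rintro rfl
    exact hC.not_linkedOutside_of_consecutiveOn hxy hxa hxb hab
  have hxy'' : x ≠ y' := by
    rintro rfl
    exact hC.not_linkedOutside_of_consecutiveOn hxy' hxb hxa hab.symm
  obtain ⟨A, B, rfl⟩ := hxy.exists_eq_append hC.nodup hxy' hxx' hyx' hxy''
  have hchain : (x :: y :: (A ++ x' :: y' :: B) ++ [x]).IsChain G.Adj := hC.chain
  have hA : (y :: (A ++ [x'])).IsChain G.Adj := hchain.infix ⟨[x], y' :: B ++ [x], by simp⟩
  have hB : (y' :: (B ++ [x])).IsChain G.Adj := hchain.infix ⟨x :: y :: A ++ [x'], [], by simp⟩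
  have hB' : (x :: (B.reverse ++ [y'])).IsChain G.Adj := by
    simpa using List.isChain_reverse.2 (hB.imp fun _ _ h => h.symm)
  -- Replacing `x y` and `x' y'` by `y y'` turns `C` into the path `x, B reversed, y', y, A, x'`.
  refine hC.not_linkedOutside_of_path (L := B.reverse ++ y' :: y :: A) ?_ ?_ hxa hxb hab
  · refine Multiset.coe_eq_coe.2 ?_
    classical
    rw [List.perm_iff_count]
    intro v
    simp only [List.count_cons, List.count_append, List.count_reverse, List.count_nil]
    ring
  · have := (List.isChain_split (l₁ := x :: B.reverse)).2
      ⟨hB', List.isChain_cons_cons.2 ⟨hyy'.symm, hA⟩⟩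
    simpa using this

end IsLongestCycle

end Longest

section Attachments

variable {V : Type*} {G : SimpleGraph V} {C : Cycle V} {u : V}

/-- The vertices of the cyclic sequence `C` with a neighbor in the component of `G - C` that
contains `u`. -/
def attachments (G : SimpleGraph V) (C : Cycle V) (u : V) : Set V :=
  {x | x ∈ C ∧ ∃ w, LinkedOutside G C u w ∧ G.Adj x w}

/-- The successors on `C` of the attachments of `u`. Together with `u` they form the independent
set in the Chvátal–Erdős argument. -/
def attachmentSuccessors (G : SimpleGraph V) (C : Cycle V) (u : V) : Set V :=
  {y | ∃ x ∈ attachments G C u, ConsecutiveOn C x y}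

lemma notMem_attachmentSuccessors (hu : u ∉ C) : u ∉ attachmentSuccessors G C u :=
  fun ⟨_, _, hxu⟩ => hu hxu.right_mem

lemma LinkedOutside.of_reachable {a b : ((attachments G C u)ᶜ : Set V)}
    (hab : (G.induce (attachments G C u)ᶜ).Reachable a b) (ha : LinkedOutside G C u a) :
    LinkedOutside G C u b := by
  obtain ⟨p⟩ := hab
  induction p with
  | nil => exact ha
  | @cons a b _ hab _ ih =>
    have hab' : G.Adj a b := hab
    have hb : (b : V) ∉ C := fun hb => b.2 ⟨hb, a, ha, hab'.symm⟩
    exact ih (ha.trans (.of_adj ha.right_notMem hb hab'))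

namespace IsLongestCycle

lemma not_adj_of_mem_attachmentSuccessors (hC : IsLongestCycle G C) {y w : V}
    (hy : y ∈ attachmentSuccessors G C u) (hw : LinkedOutside G C u w) : ¬ G.Adj y w := by
  obtain ⟨x, ⟨-, a, ha, hxa⟩, hxy⟩ := hy
  exact fun hyw => hC.not_linkedOutside_of_consecutiveOn hxy hxa hyw (ha.symm.trans hw)

lemma isIndepSet_insert_attachmentSuccessors (hC : IsLongestCycle G C) (hu : u ∉ C) :
    G.IsIndepSet (insert u (attachmentSuccessors G C u)) := by
  refine Set.Pairwise.insert ?_ fun y hy _ => ?_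
  · rintro y ⟨x, ⟨-, a, ha, hxa⟩, hxy⟩ y' ⟨x', ⟨-, b, hb, hxb⟩, hxy'⟩ -
    exact hC.not_adj_of_consecutiveOn hxy hxy' hxa hxb (ha.symm.trans hb)
  · have hyu := hC.not_adj_of_mem_attachmentSuccessors hy (.refl hu)
    exact ⟨fun huy => hyu huy.symm, hyu⟩

lemma exists_mem_notMem_attachments (hC : IsLongestCycle G C) (hne : C.Nontrivial) :
    ∃ d ∈ C, d ∉ attachments G C u := by
  obtain ⟨c, -, -, hc, -⟩ := id hne
  by_cases hcA : c ∈ attachments G C u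
  · obtain ⟨d, hcd⟩ := exists_consecutiveOn hne hc
    refine ⟨d, hcd.right_mem, fun ⟨_, w, hw, hdw⟩ => ?_⟩
    exact hC.not_adj_of_mem_attachmentSuccessors ⟨c, hcA, hcd⟩ hw hdw
  · exact ⟨c, hc, hcA⟩

lemma ncard_attachments_le [Finite V] (hC : IsLongestCycle G C) (hne : C.Nontrivial) :
    (attachments G C u).ncard ≤ (attachmentSuccessors G C u).ncard := by
  choose! next hnext using fun x hx => exists_consecutiveOn (x := x) hne hx
  refine Set.ncard_le_ncard_of_injOn next (fun x hx => ⟨x, hx, hnext x hx.1⟩) ?_ (Set.toFinite _)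
  intro x hx x' hx' heq
  exact (hnext x hx.1).left_unique hC.nodup (heq ▸ hnext x' hx'.1)

end IsLongestCycle

end Attachments

section Connectivity

variable {V : Type*} [Fintype V] {G : SimpleGraph V} {k : ℕ}

namespace IsKConnected

lemma connected_induce_compl (hG : IsKConnected G k) {A : Set V} (hA : A.ncard < k) :
    (G.induce Aᶜ).Connected := by
  classical
  rw [Set.ncard_eq_toFinset_card'] at hA
  have hconn := hG.2 A.toFinset hA
  rwa [Set.coe_toFinset] at hconn

lemma le_degree [DecidableRel G.Adj] (hG : IsKConnected G k) (v : V) : k ≤ G.degree v := by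
  classical
  by_contra! hlt
  have hconn := hG.2 (G.neighborFinset v) hlt
  obtain ⟨w, hw⟩ : ∃ w, w ∉ insert v (G.neighborFinset v) := by
    refine Finset.exists_mem_notMem_of_card_lt_card (t := Finset.univ) ?_ |>.imp fun _ h => h.2
    have hle := Finset.card_insert_le v (G.neighborFinset v)
    have hcard := hG.1
    rw [card_neighborFinset_eq_degree] at hle
    rw [Finset.card_univ]
    omega
  rw [Finset.mem_insert, not_or] at hw
  have : Nontrivial ((G.neighborFinset v : Set V)ᶜ : Set V) :=
    ⟨⟨v, by simp⟩, ⟨w, by simpa using hw.2⟩, fun h => hw.1 (congrArg Subtype.val h).symm⟩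
  obtain ⟨b, hvb⟩ := hconn.preconnected.exists_adj_of_nontrivial ⟨v, by simp⟩
  exact b.2 (by simpa using hvb)

lemma le_ncard_attachments (hG : IsKConnected G k) {C : Cycle V} {u d : V} (hu : u ∉ C)
    (hd : d ∈ C) (hdA : d ∉ attachments G C u) : k ≤ (attachments G C u).ncard := by
  by_contra! hlt
  have huA : u ∉ attachments G C u := fun h => hu h.1
  have hud := (hG.connected_induce_compl hlt).preconnected ⟨u, huA⟩ ⟨d, hdA⟩
  exact (LinkedOutside.of_reachable hud (.refl hu)).right_notMem hd

theorem exists_isNIndepSet_of_not_isHamiltonian [DecidableEq V] (hG : IsKConnected G k)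
    (hk : 0 < k) (hcard : 3 ≤ Fintype.card V) (hHam : ¬ G.IsHamiltonian) :
    ∃ I : Finset V, G.IsNIndepSet (k + 1) I := by
  classical
  obtain ⟨C, hC⟩ := exists_isLongestCycle G
  obtain ⟨u, hu⟩ : ∃ u, u ∉ C := by
    by_contra! hall
    exact hHam <| isHamiltonian_of_cycle hC.nodup hC.chain
      (length_eq_card_of_forall_mem hC.nodup hall) hcard
  obtain ⟨b, hub⟩ := (G.degree_pos_iff_exists_adj u).1 (hk.trans_le (hG.le_degree u))
  have hne := hC.nontrivial hub
  obtain ⟨d, hd, hdA⟩ := hC.exists_mem_notMem_attachments (u := u) hne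
  have hle : k + 1 ≤ (insert u (attachmentSuccessors G C u)).ncard := by
    rw [Set.ncard_insert_of_notMem (notMem_attachmentSuccessors hu)]
    exact Nat.succ_le_succ ((hG.le_ncard_attachments hu hd hdA).trans (hC.ncard_attachments_le hne))
  rw [Set.ncard_eq_toFinset_card'] at hle
  obtain ⟨I, hI, hIcard⟩ := Finset.exists_subset_card_eq hle
  refine ⟨I, ?_, hIcard⟩
  exact (hC.isIndepSet_insert_attachmentSuccessors hu).mono (Set.subset_toFinset.1 hI)

end IsKConnected

end Connectivity

section Crown

variable {V : Type*} {m : ℕ} {a b : ZMod m → V}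

/-- The enumeration `a 0, b 2, a 1, b 3, a 2, b 4, …` of the vertices of a crown graph, in which
`a i` and `b j` are adjacent for `i ≠ j`. The shift by `2` makes the indices of successive vertices
differ by `1` or `2`, both nonzero modulo `m ≥ 3`. -/
def crownEnumeration (a b : ZMod m → V) (i : ℕ) : V :=
  if Even i then a (i / 2 : ℕ) else b ((i / 2 : ℕ) + 2)

lemma crownEnumeration_even (a b : ZMod m → V) (t : ℕ) : crownEnumeration a b (2 * t) = a t := by
  simp [crownEnumeration]

lemma crownEnumeration_odd (a b : ZMod m → V) (t : ℕ) :
    crownEnumeration a b (2 * t + 1) = b (t + 2) := by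
  simp [crownEnumeration, show (2 * t + 1) / 2 = t by omega]

lemma injOn_crownEnumeration (hab : Function.Injective (Sum.elim a b)) :
    Set.InjOn (crownEnumeration a b) (Set.Iio (2 * m)) := by
  obtain ⟨ha, hb, hne⟩ := Sum.elim_injective.1 hab
  have cast_inj {s t : ℕ} (hs : s < m) (ht : t < m) (h : (s : ZMod m) = t) : s = t := by
    rwa [ZMod.natCast_eq_natCast_iff', Nat.mod_eq_of_lt hs, Nat.mod_eq_of_lt ht] at h
  intro i hi j hj hij
  rw [Set.mem_Iio] at hi hj
  obtain ⟨s, rfl | rfl⟩ := i.even_or_odd' <;> obtain ⟨t, rfl | rfl⟩ := j.even_or_odd' <;>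
    simp only [crownEnumeration_even, crownEnumeration_odd] at hij
  · rw [cast_inj (by omega) (by omega) (ha hij)]
  · exact absurd hij (hne _ _)
  · exact absurd hij.symm (hne _ _)
  · rw [cast_inj (by omega) (by omega) (add_right_cancel (hb hij))]

lemma adj_crownEnumeration_succ {G : SimpleGraph V} (hm : 3 ≤ m)
    (hadj : ∀ i j, i ≠ j → G.Adj (a i) (b j)) (i : ℕ) :
    G.Adj (crownEnumeration a b i) (crownEnumeration a b (i + 1)) := by
  have cast_ne_zero (r : ℕ) (hr : 0 < r) (hrm : r < m) : (r : ZMod m) ≠ 0 := fun h =>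
    (Nat.le_of_dvd hr ((ZMod.natCast_eq_zero_iff r m).1 h)).not_gt hrm
  have hone : (1 : ZMod m) ≠ 0 := by simpa using cast_ne_zero 1 (by omega) (by omega)
  have htwo : (2 : ZMod m) ≠ 0 := by simpa using cast_ne_zero 2 (by omega) (by omega)
  obtain ⟨t, rfl | rfl⟩ := i.even_or_odd'
  · rw [crownEnumeration_even, crownEnumeration_odd]
    exact hadj _ _ (by simpa using htwo)
  · rw [show 2 * t + 1 + 1 = 2 * (t + 1) by ring, crownEnumeration_odd, crownEnumeration_even]
    refine (hadj _ _ fun h => hone ?_).symm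
    push_cast at h
    linear_combination -h

theorem isHamiltonian_of_crown [Fintype V] [DecidableEq V] {G : SimpleGraph V} (hm : 3 ≤ m)
    (hab : Function.Bijective (Sum.elim a b)) (hadj : ∀ i j, i ≠ j → G.Adj (a i) (b j)) :
    G.IsHamiltonian := by
  have : NeZero m := ⟨by omega⟩
  have hcard : Fintype.card V = 2 * m := by
    rw [← Fintype.card_of_bijective hab, Fintype.card_sum, ZMod.card, two_mul]
  refine isHamiltonian_of_enumeration (hcard ▸ injOn_crownEnumeration hab.injective)
    (fun i _ => adj_crownEnumeration_succ hm hadj i) ?_ (by omega)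
  rw [hcard, crownEnumeration_even]
  simp [crownEnumeration]

end Crown

section Bipartite

variable {V : Type*} [Fintype V] {G : SimpleGraph V}

variable [DecidableRel G.Adj] {s t : Finset V}

lemma eq_of_not_adj_of_isBipartiteWith (h : G.IsBipartiteWith s t) {x y y' : V} (hx : x ∈ s)
    (hdeg : #t ≤ G.degree x + 1) (hy : y ∈ t) (hy' : y' ∈ t) (hxy : ¬ G.Adj x y)
    (hxy' : ¬ G.Adj x y') : y = y' := by
  classical
  have hcard : #(t \ G.neighborFinset x) ≤ 1 := by
    rw [Finset.card_sdiff_of_subset (isBipartiteWith_neighborFinset_subset h hx),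
      card_neighborFinset_eq_degree]
    omega
  exact Finset.card_le_one.1 hcard y (by simp [hy, hxy]) y' (by simp [hy', hxy'])

lemma exists_equiv_adj_of_ne (h : G.IsBipartiteWith s t) (hcard : #s = #t)
    (hdeg : ∀ v, #s ≤ G.degree v + 1) :
    ∃ g : s ≃ t, ∀ (x : s) (y : t), g x ≠ y → G.Adj x y := by
  classical
  let B : Set s := {x | ∃ y ∈ t, ¬ G.Adj x y}
  have hex (x : s) : ∃ y, x ∈ B → y ∈ t ∧ ¬ G.Adj x y := by
    by_cases hx : x ∈ B
    · exact hx.imp fun y hy _ => hy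
    · exact ⟨x, fun h => absurd h hx⟩
  choose f hf using hex
  have hinj : Set.InjOn f B := fun x hx x' hx' hxx' =>
    Subtype.ext <| eq_of_not_adj_of_isBipartiteWith h.symm (hf x hx).1 (hdeg _) x.2 x'.2
      (fun hadj => (hf x hx).2 hadj.symm) fun hadj => (hf x' hx').2 (hxx' ▸ hadj.symm)
  obtain ⟨g, hg⟩ := Set.MapsTo.exists_equiv_extend_of_card_eq (by simpa using hcard)
    (fun x hx => (hf x hx).1) hinj
  refine ⟨g, fun x y hxy => ?_⟩
  by_contra hadj
  have hx : x ∈ B := ⟨y, y.2, hadj⟩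
  refine hxy (Subtype.ext ((hg x hx).trans ?_))
  exact eq_of_not_adj_of_isBipartiteWith h x.2 (hcard ▸ hdeg _) (hf x hx).1 y.2 (hf x hx).2 hadj

theorem isHamiltonian_of_isBipartiteWith_of_card_le_degree_add_one [DecidableEq V]
    (h : G.IsBipartiteWith s t) (hst : (s : Set V) ∪ t = Set.univ) (hcard : #s = #t) (hs : 3 ≤ #s)
    (hdeg : ∀ v, #s ≤ G.degree v + 1) : G.IsHamiltonian := by
  have : NeZero #s := ⟨by omega⟩
  obtain ⟨g, hg⟩ := exists_equiv_adj_of_ne h hcard hdeg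
  let e : ZMod #s ≃ s := Fintype.equivOfCardEq (by simp)
  refine isHamiltonian_of_crown (a := fun i => (e i : V)) (b := fun i => (g (e i) : V)) hs
    ⟨?_, ?_⟩ ?_
  · refine Function.Injective.sumElim (Subtype.val_injective.comp e.injective)
      (Subtype.val_injective.comp (g.injective.comp e.injective)) fun i j hij => ?_
    exact Set.disjoint_left.1 h.disjoint (e i).2 (by rw [hij]; exact (g (e j)).2)
  · intro v
    rcases (Set.eq_univ_iff_forall.1 hst v : v ∈ (s : Set V) ∪ t) with hv | hv
    · exact ⟨.inl (e.symm ⟨v, hv⟩), by simp⟩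
    · exact ⟨.inr (e.symm (g.symm ⟨v, hv⟩)), by simp⟩
  · intro i j hij
    exact hg _ _ (by simpa using hij)

end Bipartite

section Degree

variable {V : Type*} [Fintype V] {G : SimpleGraph V} [DecidableRel G.Adj]

section Independent

variable {I : Finset V}

lemma sum_degree_eq_card_biUnion_incidenceFinset [DecidableEq V] (hI : G.IsIndepSet I) :
    ∑ v ∈ I, G.degree v = #(I.biUnion fun v => G.incidenceFinset v) := by
  rw [Finset.card_biUnion]
  · simp only [card_incidenceFinset_eq_degree]
  · intro v hv w hw hvw
    refine Finset.disjoint_left.2 fun e hev hew => ?_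
    rw [mem_incidenceFinset] at hev hew
    exact hI hv hw hvw (adj_of_mem_incidenceSet _ hvw hev hew)

lemma sum_degree_le_card_edgeFinset (hI : G.IsIndepSet I) :
    ∑ v ∈ I, G.degree v ≤ #G.edgeFinset := by
  classical
  rw [sum_degree_eq_card_biUnion_incidenceFinset hI]
  exact Finset.card_le_card (Finset.biUnion_subset.2 fun v _ => G.incidenceFinset_subset v)

lemma card_mul_minDegree_le_card_edgeFinset (hI : G.IsIndepSet I) :
    #I * G.minDegree ≤ #G.edgeFinset :=
  (Finset.card_nsmul_le_sum I _ _ fun v _ => G.minDegree_le_degree v).trans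
    (sum_degree_le_card_edgeFinset hI)

lemma isBipartiteWith_compl_of_card_edgeFinset_le [DecidableEq V] (hI : G.IsIndepSet I)
    (he : #G.edgeFinset ≤ ∑ v ∈ I, G.degree v) : G.IsBipartiteWith I (Iᶜ : Finset V) := by
  have hcover : I.biUnion (fun v => G.incidenceFinset v) = G.edgeFinset := by
    refine Finset.eq_of_subset_of_card_le
      (Finset.biUnion_subset.2 fun v _ => G.incidenceFinset_subset v) ?_
    rwa [← sum_degree_eq_card_biUnion_incidenceFinset hI]
  refine ⟨by simpa using disjoint_compl_right, fun v w hvw => ?_⟩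
  have hmem : s(v, w) ∈ I.biUnion fun v => G.incidenceFinset v := by
    rwa [hcover, mem_edgeFinset]
  obtain ⟨x, hx, hxe⟩ := Finset.mem_biUnion.1 hmem
  have hxvw : x = v ∨ x = w := by simpa using ((mem_incidenceFinset _ _ _).1 hxe).2
  rcases hxvw with rfl | rfl
  · exact .inl ⟨hx, by simpa using fun hw => hI hx hw hvw.ne hvw⟩
  · exact .inr ⟨by simpa using fun hv => hI hv hx hvw.ne hvw, hx⟩

end Independent

lemma card_eq_of_isBipartiteWith_of_isRegularOfDegree {s t : Finset V} {d : ℕ}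
    (h : G.IsBipartiteWith s t) (hreg : G.IsRegularOfDegree d) (hd : 0 < d) : #s = #t := by
  have hsum := isBipartiteWith_sum_degrees_eq h
  simp only [hreg.degree_eq, Finset.sum_const, smul_eq_mul] at hsum
  exact Nat.eq_of_mul_eq_mul_right hd hsum

lemma isRegularOfDegree_minDegree (h : G.maxDegree = G.minDegree) :
    G.IsRegularOfDegree G.minDegree := fun v =>
  le_antisymm ((G.degree_le_maxDegree v).trans_eq h) (G.minDegree_le_degree v)

lemma card_div_maxDegree_le_invDegree (hδ : 0 < G.minDegree) :
    (Fintype.card V : ℝ) / G.maxDegree ≤ invDegree G := by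
  have hle (v : V) (_ : v ∈ Finset.univ) : (1 : ℝ) / G.maxDegree ≤ 1 / G.degree v := by
    have hv : 0 < G.degree v := hδ.trans_le (G.minDegree_le_degree v)
    have hvΔ := G.degree_le_maxDegree v
    gcongr
  have hsum := Finset.card_nsmul_le_sum _ _ _ hle
  rwa [nsmul_eq_mul, Finset.card_univ, mul_one_div] at hsum

end Degree

section Numerics

lemma sq_mul_sq_add_sq_le_of_div_le {n m Δ δ e : ℝ} (hm : 0 < m) (hΔ : 0 < Δ)
    (h : n / Δ ≤ (n - m) / Δ + (2 * m ^ 2 * δ ^ 2 - e ^ 2) / (m * Δ ^ 3)) :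
    m ^ 2 * Δ ^ 2 + e ^ 2 ≤ 2 * m ^ 2 * δ ^ 2 := by
  have hdiv : m / Δ ≤ (2 * m ^ 2 * δ ^ 2 - e ^ 2) / (m * Δ ^ 3) := by
    rw [sub_div] at h
    linarith
  rw [le_div_iff₀ (by positivity)] at hdiv
  have hcancel : m / Δ * (m * Δ ^ 3) = m ^ 2 * Δ ^ 2 := by field_simp
  linarith

lemma eq_and_eq_mul_of_sq_mul_sq_add_sq_le {m Δ δ e : ℝ} (hm : 0 < m) (hδ : 0 ≤ δ) (hδΔ : δ ≤ Δ)
    (he : m * δ ≤ e) (h : m ^ 2 * Δ ^ 2 + e ^ 2 ≤ 2 * m ^ 2 * δ ^ 2) : Δ = δ ∧ e = m * δ := by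
  have hΔ : 0 ≤ Δ := hδ.trans hδΔ
  have hmδ : 0 ≤ m * δ := by positivity
  have hsqΔ : (m * δ) ^ 2 ≤ (m * Δ) ^ 2 := by gcongr
  have hsqe : (m * δ) ^ 2 ≤ e ^ 2 := by gcongr
  have heq_e : e ^ 2 = (m * δ) ^ 2 := by linarith
  have heq_Δ : (m * Δ) ^ 2 = (m * δ) ^ 2 := by linarith
  exact ⟨mul_left_cancel₀ hm.ne' ((sq_eq_sq₀ (by positivity) hmδ).1 heq_Δ),
    (sq_eq_sq₀ (hmδ.trans he) hmδ).1 heq_e⟩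

end Numerics

/-- If `G` is a `k`-connected (`k ≥ 2`) graph with `n ≥ 3` vertices, `e` edges, minimum degree
`δ ≥ 1`, and maximum degree `Δ`, and `Inv(G) ≤ (n − k − 1)/Δ + (2(k+1)²δ² − e²)/((k+1)Δ³)`,
then `G` is Hamiltonian. -/
theorem stmt9 {V : Type*} [Fintype V] [DecidableEq V] (G : SimpleGraph V) [DecidableRel G.Adj]
    (k : ℕ) (hk : 2 ≤ k) (hconn : IsKConnected G k) (hn : 3 ≤ Fintype.card V)
    (hδ : 1 ≤ G.minDegree)
    (h : invDegree G ≤ ((Fintype.card V : ℝ) - k - 1) / (G.maxDegree : ℝ)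
        + (2 * ((k : ℝ) + 1) ^ 2 * (G.minDegree : ℝ) ^ 2 - (G.edgeFinset.card : ℝ) ^ 2)
          / (((k : ℝ) + 1) * (G.maxDegree : ℝ) ^ 3)) :
    G.IsHamiltonian := by
  by_contra hHam
  obtain ⟨I, hI, hIcard⟩ := hconn.exists_isNIndepSet_of_not_isHamiltonian (by omega) hn hHam
  have hδΔ := G.minDegree_le_maxDegree
  have hδe : ((k : ℝ) + 1) * G.minDegree ≤ #G.edgeFinset :=
    mod_cast hIcard ▸ card_mul_minDegree_le_card_edgeFinset hI
  have hpoly := sq_mul_sq_add_sq_le_of_div_le (n := Fintype.card V) (m := k + 1) (by positivity)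
    (Nat.cast_pos.2 (by omega))
    ((card_div_maxDegree_le_invDegree hδ).trans (by rwa [← sub_sub]))
  obtain ⟨hΔ, he⟩ := eq_and_eq_mul_of_sq_mul_sq_add_sq_le (by positivity) (Nat.cast_nonneg _)
    (mod_cast hδΔ) hδe hpoly
  have hreg := isRegularOfDegree_minDegree (G := G) (mod_cast hΔ)
  have hbip : G.IsBipartiteWith I (Iᶜ : Finset V) := by
    refine isBipartiteWith_compl_of_card_edgeFinset_le hI (le_of_eq ?_)
    simp only [hreg.degree_eq, Finset.sum_const, smul_eq_mul, hIcard]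
    exact_mod_cast he
  refine hHam <| isHamiltonian_of_isBipartiteWith_of_card_le_degree_add_one hbip (by simp)
    (card_eq_of_isBipartiteWith_of_isRegularOfDegree hbip hreg hδ) (by omega) fun v => ?_
  exact hIcard.trans_le (Nat.succ_le_succ (hconn.le_degree v))
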